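/- Let λ, μ ∈ ℂ with 0 < |λ| < 1 < |μ| and |λ|·|μ|³ < 1, and let F = (F₁, F₂) be holomorphic on the open polydisk 𝔻 × 𝔻 ⊂ ℂ² with F(x,0) = (λx, 0) and F(0,y) = (0, μy) for all x, y ∈ 𝔻. Then there exist r ∈ (0,1) and constants C > 0, c > 0 such that for every n ∈ ℕ the following holds: if (p_k)_{0 ≤ k ≤ n} is a sequence of points of the polydisk {|x| ≤ r} × {|y| ≤ r} with p_{k+1} = F(p_k) for 0 ≤ k ≤ n−1, then the Jacobian matrix A = DF^n(p₀) (the product DF(p_{n−1})·…·DF(p₀) of the 2×2 complex Jacobian matrices of F along the orbit) satisfies |A₁₁| ≤ C·|λμ|^n, |A₁₂| ≤ C·|λμ|^n, |A₂₁| ≤ C, and c·|μ|^n ≤ |A₂₂| ≤ C·|μ|^n. -/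

import Mathlib

/-- The complex Jacobian matrix of a map `F : ℂ² → ℂ²` at a point, i.e. the 2×2 matrix
of complex partial derivatives of `F`. -/
noncomputable def jacobian (F : ℂ × ℂ → ℂ × ℂ) (p : ℂ × ℂ) : Matrix (Fin 2) (Fin 2) ℂ :=
  !![(fderiv ℂ F p (1, 0)).1, (fderiv ℂ F p (0, 1)).1;
     (fderiv ℂ F p (1, 0)).2, (fderiv ℂ F p (0, 1)).2]

theorem aux_growth (n : ℕ) (s e : ℕ → ℝ) (hs : ∀ k, 0 ≤ s k)
    (h : ∀ k, k < n → s (k + 1) ≤ (1 + e k) * s k) :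
    ∀ m, m ≤ n → s m ≤ Real.exp (∑ k ∈ Finset.range m, e k) * s 0 := by
  intro m
  induction m with
  | zero => intro _; simp
  | succ m ih =>
    intro hm
    have h1 := ih (by omega)
    have h2 := h m (by omega)
    rw [Finset.sum_range_succ, Real.exp_add]
    have h3 : 1 + e m ≤ Real.exp (e m) := by linarith [Real.add_one_le_exp (e m)]
    calc s (m + 1) ≤ (1 + e m) * s m := h2
      _ ≤ Real.exp (e m) * s m := mul_le_mul_of_nonneg_right h3 (hs m)
      _ ≤ Real.exp (e m) * (Real.exp (∑ k ∈ Finset.range m, e k) * s 0) :=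
          mul_le_mul_of_nonneg_left h1 (Real.exp_pos _).le
      _ = _ := by ring

theorem aux_exp (e : ℝ) (h0 : 0 ≤ e) (h1 : e ≤ 1 / 2) : 1 ≤ Real.exp (2 * e) * (1 - e) := by
  have := Real.add_one_le_exp (2 * e)
  nlinarith

theorem aux_lower (n : ℕ) (s e : ℕ → ℝ) (hs : ∀ k, 0 ≤ s k)
    (he : ∀ k, k < n → 0 ≤ e k ∧ e k ≤ 1 / 2)
    (h : ∀ k, k < n → (1 - e k) * s k ≤ s (k + 1)) (j : ℕ) :
    ∀ m, j + m ≤ n →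
      s j ≤ Real.exp (2 * ∑ k ∈ Finset.range m, e (j + k)) * s (j + m) := by
  intro m
  induction m with
  | zero => intro _; simp
  | succ m ih =>
    intro hm
    have h1 := ih (by omega)
    have h2 := h (j + m) (by omega)
    obtain ⟨h3, h4⟩ := he (j + m) (by omega)
    rw [Finset.sum_range_succ, mul_add, Real.exp_add]
    have h5 := aux_exp _ h3 h4
    refine h1.trans ?_
    rw [mul_assoc]
    refine mul_le_mul_of_nonneg_left ?_ (Real.exp_pos _).le
    calc s (j + m) = 1 * s (j + m) := by ring
      _ ≤ (Real.exp (2 * e (j + m)) * (1 - e (j + m))) * s (j + m) :=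
          mul_le_mul_of_nonneg_right h5 (hs _)
      _ = Real.exp (2 * e (j + m)) * ((1 - e (j + m)) * s (j + m)) := by ring
      _ ≤ _ := mul_le_mul_of_nonneg_left h2 (Real.exp_pos _).le

theorem aux_tele_down (n : ℕ) (s : ℕ → ℝ) (a : ℝ)
    (h : ∀ k, k < n → s (k + 1) ≤ a * s k) :
    ∀ m, m ≤ n → (1 - a) * ∑ k ∈ Finset.range m, s k ≤ s 0 - s m := by
  intro m
  induction m with
  | zero => intro _; simp
  | succ m ih =>
    intro hm
    have h1 := ih (by omega)
    have h2 := h m (by omega)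
    rw [Finset.sum_range_succ]
    nlinarith

theorem aux_tele_up (n : ℕ) (s : ℕ → ℝ) (a : ℝ)
    (h : ∀ k, k < n → a * s k ≤ s (k + 1)) :
    ∀ m, m ≤ n → (a - 1) * ∑ k ∈ Finset.range m, s k ≤ s m - s 0 := by
  intro m
  induction m with
  | zero => intro _; simp
  | succ m ih =>
    intro hm
    have h1 := ih (by omega)
    have h2 := h m (by omega)
    rw [Finset.sum_range_succ]
    nlinarith

theorem aux_orbit (L m K r : ℝ) (hL0 : 0 < L) (hL1 : L < 1) (hm : 1 < m) (hK : 0 ≤ K)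
    (hr0 : 0 < r) (hr1 : r ≤ 1) (hd1 : K * r ≤ (1 - L) / 4) (hd2 : K * r ≤ (m - 1) / 4)
    (n : ℕ) (x y : ℕ → ℝ) (hx0 : ∀ k, 0 ≤ x k) (hy0 : ∀ k, 0 ≤ y k)
    (hx1 : ∀ k, k ≤ n → x k ≤ r) (hy1 : ∀ k, k ≤ n → y k ≤ r)
    (hx : ∀ k, k < n → x (k + 1) ≤ (L + K * y k) * x k)
    (hy : ∀ k, k < n → (m - K * x k) * y k ≤ y (k + 1)) :
    (∀ j, j ≤ n → ∑ k ∈ Finset.range j, x k ≤ 2 / (1 - L)) ∧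
    (∀ j, j ≤ n → ∑ k ∈ Finset.range j, y k ≤ 2 / (m - 1)) ∧
    (∀ j, j ≤ n → x j ≤ Real.exp (K * (2 / (m - 1)) / L) * L ^ j) ∧
    (∀ j, j ≤ n → y j ≤ Real.exp (2 * (K * (2 / (1 - L)))) * (m ^ j / m ^ n)) := by
  have hKx : ∀ k, k ≤ n → K * x k ≤ K * r := fun k hk => mul_le_mul_of_nonneg_left (hx1 k hk) hK
  have hKy : ∀ k, k ≤ n → K * y k ≤ K * r := fun k hk => mul_le_mul_of_nonneg_left (hy1 k hk) hK
  have hm0 : 0 < m := by linarith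
  have A : ∀ j, j ≤ n → ∑ k ∈ Finset.range j, x k ≤ 2 / (1 - L) := by
    intro j hj
    have h1 := aux_tele_down n x (L + K * r) (fun k hk => (hx k hk).trans
      (mul_le_mul_of_nonneg_right (by linarith [hKy k hk.le]) (hx0 k))) j hj
    have h2 : 0 ≤ ∑ k ∈ Finset.range j, x k := Finset.sum_nonneg fun k _ => hx0 k
    rw [le_div_iff₀ (by linarith)]
    nlinarith [hx0 j, hx1 0 (by omega)]
  have B : ∀ j, j ≤ n → ∑ k ∈ Finset.range j, y k ≤ 2 / (m - 1) := by
    intro j hj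
    have h1 := aux_tele_up n y (m - K * r) (fun k hk => le_trans
      (mul_le_mul_of_nonneg_right (by linarith [hKx k hk.le]) (hy0 k)) (hy k hk)) j hj
    have h2 : 0 ≤ ∑ k ∈ Finset.range j, y k := Finset.sum_nonneg fun k _ => hy0 k
    rw [le_div_iff₀ (by linarith)]
    nlinarith [hy0 0, hy1 j hj]
  refine ⟨A, B, ?_, ?_⟩
  · intro j hj
    have h1 := aux_growth n (fun k => x k / L ^ k) (fun k => K * y k / L)
      (fun k => div_nonneg (hx0 k) (by positivity)) (fun k hk => by
        have := hx k hk
        have e : (1 + K * y k / L) * (x k / L ^ k) = ((L + K * y k) * x k) / L ^ (k + 1) := by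
          field_simp
          ring
        simp only [e]
        gcongr) j hj
    simp only [pow_zero, div_one] at h1
    rw [div_le_iff₀ (by positivity)] at h1
    refine h1.trans (mul_le_mul_of_nonneg_right ?_ (by positivity))
    rw [← Finset.sum_div, ← Finset.mul_sum]
    calc _ ≤ Real.exp (K * (∑ k ∈ Finset.range j, y k) / L) * 1 :=
          mul_le_mul_of_nonneg_left ((hx1 0 (by omega)).trans hr1) (Real.exp_pos _).le
      _ ≤ _ := by
          rw [mul_one]
          have := B j hj
          gcongr
  · intro j hj
    obtain ⟨i, rfl⟩ := Nat.exists_eq_add_of_le hj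
    have h1 := aux_lower (j + i) (fun k => y k / m ^ k) (fun k => K * x k / m)
      (fun k => div_nonneg (hy0 k) (by positivity)) (fun k hk => ⟨by
        have := hx0 k
        positivity, by
        rw [div_le_iff₀ hm0]
        linarith [hKx k hk.le]⟩) (fun k hk => by
        have := hy k hk
        have e : (1 - K * x k / m) * (y k / m ^ k) = ((m - K * x k) * y k) / m ^ (k + 1) := by
          field_simp
          ring
        simp only [e]
        gcongr) j i le_rfl
    rw [div_le_iff₀ (by positivity)] at h1
    refine h1.trans ?_
    have h2 : ∑ k ∈ Finset.range i, K * x (j + k) / m ≤ K * (2 / (1 - L)) := by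
      have h3 : ∑ k ∈ Finset.range i, x (j + k) ≤ 2 / (1 - L) := by
        refine le_trans ?_ (A (j + i) le_rfl)
        rw [Finset.sum_range_add]
        have : 0 ≤ ∑ k ∈ Finset.range j, x k := Finset.sum_nonneg fun k _ => hx0 k
        linarith
      rw [← Finset.sum_div, ← Finset.mul_sum]
      have h4 : 0 ≤ ∑ k ∈ Finset.range i, x (j + k) := Finset.sum_nonneg fun k _ => hx0 _
      calc _ ≤ K * ∑ k ∈ Finset.range i, x (j + k) := div_le_self (by positivity) hm.le
        _ ≤ _ := mul_le_mul_of_nonneg_left h3 hK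
    have h5 : y (j + i) ≤ 1 := (hy1 _ le_rfl).trans hr1
    have h6 := hy0 (j + i)
    calc _ ≤ Real.exp (2 * (K * (2 / (1 - L)))) * (1 / m ^ (j + i)) * m ^ j := by
          gcongr
      _ = _ := by ring

/-- Upper bound for the derivative cocycle. -/
theorem aux_upper (L m K E1 E2 B1 B2 : ℝ) (hL0 : 0 < L) (hL1 : L < 1) (hm : 1 < m) (hK : 0 ≤ K)
    (hE1 : 0 ≤ E1) (hE2 : 0 ≤ E2)
    (n : ℕ) (x y u v : ℕ → ℝ) (hx0 : ∀ k, 0 ≤ x k) (hy0 : ∀ k, 0 ≤ y k)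
    (hu0 : ∀ k, 0 ≤ u k) (hv0 : ∀ k, 0 ≤ v k)
    (hX : ∑ k ∈ Finset.range n, x k ≤ B1) (hY : ∑ k ∈ Finset.range n, y k ≤ B2)
    (hx : ∀ j, j ≤ n → x j ≤ E1 * L ^ j)
    (hy : ∀ j, j ≤ n → y j ≤ E2 * (m ^ j / m ^ n))
    (hu : ∀ k, k < n → u (k + 1) ≤ (L + K * y k) * u k + K * x k * v k)
    (hv : ∀ k, k < n → v (k + 1) ≤ K * y k * u k + (m + K * x k) * v k) :
    u n / L ^ n + v n ≤
      Real.exp (K * B2 / L + K * E1 / L * (1 / (m - 1)) + K * E2 * (1 / (1 - L)) + K * B1)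
        * (u 0 + v 0 * m ^ n) := by
  have hm0 : 0 < m := by linarith
  have h1 := aux_growth n (fun k => u k / L ^ k + v k * m ^ n / m ^ k)
    (fun k => K * y k / L + K * E1 / L * (m ^ k / m ^ n) + K * E2 * L ^ k + K * x k)
    (fun k => by have := hu0 k; have := hv0 k; positivity) (fun k hk => by
      have a1 := hu k hk
      have a2 := hv k hk
      have a3 := hx k hk.le
      have a4 := hy k hk.le
      have b1 := hu0 k
      have b2 := hv0 k
      have b3 := hx0 k
      have b4 := hy0 k
      have c1 : u (k + 1) / L ^ (k + 1) ≤ (1 + K * y k / L) * (u k / L ^ k)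
          + K * E1 / L * (m ^ k / m ^ n) * (v k * m ^ n / m ^ k) := by
        calc u (k + 1) / L ^ (k + 1)
            ≤ ((L + K * y k) * u k + K * (E1 * L ^ k) * v k) / L ^ (k + 1) := by
              refine div_le_div_of_nonneg_right (a1.trans ?_) (by positivity)
              gcongr
          _ = _ := by
              field_simp
              ring
      have c2 : v (k + 1) * m ^ n / m ^ (k + 1) ≤ K * E2 * L ^ k * (u k / L ^ k)
          + (1 + K * x k) * (v k * m ^ n / m ^ k) := by
        calc v (k + 1) * m ^ n / m ^ (k + 1)
            ≤ (K * (E2 * (m ^ k / m ^ n)) * u k + (m + K * x k) * v k) * m ^ n / m ^ (k + 1) := by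
              refine div_le_div_of_nonneg_right (mul_le_mul_of_nonneg_right (a2.trans ?_)
                (by positivity)) (by positivity)
              gcongr
          _ = K * E2 * u k / m + (1 + K * x k / m) * (v k * m ^ n / m ^ k) := by
              field_simp
              ring
          _ ≤ K * E2 * u k + (1 + K * x k) * (v k * m ^ n / m ^ k) := by
              have d1 : K * E2 * u k / m ≤ K * E2 * u k := div_le_self (by positivity) hm.le
              have d2 : K * x k / m ≤ K * x k := div_le_self (by positivity) hm.le
              gcongr
          _ = _ := by field_simp
      have hU : 0 ≤ u k / L ^ k := by positivity
      have hV : 0 ≤ v k * m ^ n / m ^ k := by positivity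
      have e1 : 0 ≤ K * y k / L := by positivity
      have e2 : 0 ≤ K * E1 / L * (m ^ k / m ^ n) := by positivity
      have e3 : 0 ≤ K * E2 * L ^ k := by positivity
      have e4 : 0 ≤ K * x k := by positivity
      have f1 := mul_nonneg e1 hV
      have f2 := mul_nonneg e2 hU
      have f3 := mul_nonneg e3 hV
      have f4 := mul_nonneg e4 hU
      show u (k + 1) / L ^ (k + 1) + v (k + 1) * m ^ n / m ^ (k + 1) ≤ _
      linarith) n le_rfl
  have hvn : v n * m ^ n / m ^ n = v n := by field_simp
  simp only [pow_zero, div_one, hvn] at h1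
  refine h1.trans (mul_le_mul_of_nonneg_right ?_ (by have := hu0 0; have := hv0 0; positivity))
  refine Real.exp_le_exp.mpr ?_
  simp only [Finset.sum_add_distrib]
  rw [← Finset.sum_div, ← Finset.mul_sum, ← Finset.mul_sum, ← Finset.mul_sum, ← Finset.mul_sum,
    ← Finset.sum_div]
  have s1 : (∑ k ∈ Finset.range n, m ^ k) / m ^ n ≤ 1 / (m - 1) := by
    have := aux_tele_up n (fun k => m ^ k) m (fun k _ => by simp [pow_succ, mul_comm]) n le_rfl
    rw [div_le_div_iff₀ (by positivity) (by linarith)]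
    simp only [pow_zero] at this
    linarith
  have s2 : (∑ k ∈ Finset.range n, L ^ k) ≤ 1 / (1 - L) := by
    have := aux_tele_down n (fun k => L ^ k) L (fun k _ => by simp [pow_succ, mul_comm]) n le_rfl
    rw [le_div_iff₀ (by linarith)]
    simp only [pow_zero] at this
    have : 0 ≤ L ^ n := by positivity
    linarith
  gcongr

/-- Lower bound for the derivative cocycle by a cone argument. -/
theorem aux_cone (L m K r B1 B2 : ℝ) (hL0 : 0 < L) (hL1 : L < 1) (hm : 1 < m) (hK : 0 ≤ K)
    (hd1 : K * r ≤ (1 - L) / 4) (hd2 : K * r ≤ (m - 1) / 4)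
    (n : ℕ) (x y u v : ℕ → ℝ) (hx0 : ∀ k, 0 ≤ x k) (hy0 : ∀ k, 0 ≤ y k)
    (hx1 : ∀ k, k ≤ n → x k ≤ r) (hy1 : ∀ k, k ≤ n → y k ≤ r)
    (hu0 : ∀ k, 0 ≤ u k) (hv0 : ∀ k, 0 ≤ v k)
    (hX : ∑ k ∈ Finset.range n, x k ≤ B1) (hY : ∑ k ∈ Finset.range n, y k ≤ B2)
    (hu : ∀ k, k < n → u (k + 1) ≤ (L + K * y k) * u k + K * x k * v k)
    (hv : ∀ k, k < n → (m - K * x k) * v k - K * y k * u k ≤ v (k + 1))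
    (hi : u 0 ≤ v 0) :
    v 0 * m ^ n ≤ Real.exp (2 * (K * (B1 + B2))) * v n := by
  have hm0 : 0 < m := by linarith
  have hKx : ∀ k, k ≤ n → K * x k ≤ K * r := fun k hk => mul_le_mul_of_nonneg_left (hx1 k hk) hK
  have hKy : ∀ k, k ≤ n → K * y k ≤ K * r := fun k hk => mul_le_mul_of_nonneg_left (hy1 k hk) hK
  have cone : ∀ k, k ≤ n → u k ≤ v k := by
    intro k
    induction k with
    | zero => intro _; exact hi
    | succ k ih =>
      intro hk
      have h1 := ih (by omega)
      have h2 := hu k (by omega)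
      have h3 := hv k (by omega)
      have h4 := hKx k (by omega)
      have h5 := hKy k (by omega)
      have b1 := hu0 k
      have b2 := hv0 k
      have b3 : 0 ≤ K * x k := mul_nonneg hK (hx0 k)
      have b4 : 0 ≤ K * y k := mul_nonneg hK (hy0 k)
      have c1 : (L + K * y k) * u k ≤ (L + K * y k) * v k :=
        mul_le_mul_of_nonneg_left h1 (by linarith)
      have c2 : K * y k * u k ≤ K * y k * v k := mul_le_mul_of_nonneg_left h1 b4
      have c3 : 0 ≤ (m - L - 2 * (K * x k) - 2 * (K * y k)) * v k :=
        mul_nonneg (by linarith) b2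
      nlinarith
  have h1 := aux_lower n (fun k => v k / m ^ k) (fun k => K * (x k + y k) / m)
    (fun k => div_nonneg (hv0 k) (by positivity)) (fun k hk => ⟨by
        have := hx0 k
        have := hy0 k
        positivity, by
        rw [div_le_iff₀ hm0]
        linarith [hKx k hk.le, hKy k hk.le]⟩) (fun k hk => by
        have h3 := hv k hk
        have c2 : K * y k * u k ≤ K * y k * v k :=
          mul_le_mul_of_nonneg_left (cone k hk.le) (mul_nonneg hK (hy0 k))
        have h4 : (m - K * (x k + y k)) * v k ≤ v (k + 1) := by linarith
        have e : (1 - K * (x k + y k) / m) * (v k / m ^ k)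
            = ((m - K * (x k + y k)) * v k) / m ^ (k + 1) := by
          field_simp
          ring
        simp only [e]
        gcongr) 0 n (by omega)
  simp only [zero_add, pow_zero, div_one] at h1
  rw [mul_div_assoc', le_div_iff₀ (by positivity)] at h1
  refine h1.trans (mul_le_mul_of_nonneg_right ?_ (hv0 n))
  refine Real.exp_le_exp.mpr (mul_le_mul_of_nonneg_left ?_ (by norm_num))
  rw [← Finset.sum_div, ← Finset.mul_sum, Finset.sum_add_distrib]
  have p1 : 0 ≤ ∑ k ∈ Finset.range n, x k := Finset.sum_nonneg fun k _ => hx0 k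
  have p2 : 0 ≤ ∑ k ∈ Finset.range n, y k := Finset.sum_nonneg fun k _ => hy0 k
  refine (div_le_self (by positivity) hm.le).trans ?_
  gcongr

/-- Partial derivative estimate from one-variable Cauchy estimates. -/
theorem aux_cauchy (G : ℂ × ℂ → ℂ × ℂ)
    (hG : ∀ p : ℂ × ℂ, ‖p.1‖ < 1 → ‖p.2‖ < 1 → DifferentiableAt ℂ G p) :
    ∃ K : ℝ, 0 ≤ K ∧ ∀ x y : ℂ, ‖x‖ ≤ 1 / 2 → ‖y‖ ≤ 1 / 2 →
      ‖fderiv ℂ G (x, y) (1, 0) - fderiv ℂ G (x, 0) (1, 0)‖ ≤ K * ‖y‖ := by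
  have hc : IsCompact (Metric.closedBall (0 : ℂ) (3 / 4) ×ˢ Metric.closedBall (0 : ℂ) (3 / 4)) :=
    (isCompact_closedBall _ _).prod (isCompact_closedBall _ _)
  have hcont : ContinuousOn G
      (Metric.closedBall (0 : ℂ) (3 / 4) ×ˢ Metric.closedBall (0 : ℂ) (3 / 4)) := by
    rintro ⟨a, b⟩ ⟨ha, hb⟩
    simp only [mem_closedBall_zero_iff] at ha hb
    exact (hG _ (by simp only; linarith) (by simp only; linarith)).continuousAt.continuousWithinAt
  obtain ⟨M, hM⟩ := hc.exists_bound_of_continuousOn hcont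
  have hM0 : 0 ≤ M := (norm_nonneg _).trans (hM (0, 0) (by simp; norm_num))
  have hdx : ∀ x y : ℂ, ‖x‖ < 1 → ‖y‖ < 1 →
      HasDerivAt (fun z => G (z, y)) (fderiv ℂ G (x, y) (1, 0)) x := by
    intro x y hx hy
    exact (hG (x, y) hx hy).hasFDerivAt.comp_hasDerivAt x
      ((hasDerivAt_id x).prodMk (hasDerivAt_const x y))
  have hdy : ∀ x y : ℂ, ‖x‖ < 1 → ‖y‖ < 1 →
      HasDerivAt (fun z => G (x, z)) (fderiv ℂ G (x, y) (0, 1)) y := by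
    intro x y hx hy
    exact (hG (x, y) hx hy).hasFDerivAt.comp_hasDerivAt y
      ((hasDerivAt_const y x).prodMk (hasDerivAt_id y))
  have hball : ∀ a z : ℂ, ‖a‖ ≤ 1 / 2 → z ∈ Metric.closedBall a (1 / 4) → ‖z‖ ≤ 3 / 4 := by
    intro a z ha hz
    rw [mem_closedBall_iff_norm] at hz
    have := norm_add_le (z - a) a
    simp only [sub_add_cancel] at this
    linarith
  have step1 : ∀ x y : ℂ, ‖x‖ ≤ 3 / 4 → ‖y‖ ≤ 1 / 2 → ‖deriv (fun z => G (x, z)) y‖ ≤ M / (1 / 4) := by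
    intro x y hx hy
    refine Complex.norm_deriv_le_of_forall_mem_sphere_norm_le (by norm_num) ?_ ?_
    · refine DifferentiableOn.diffContOnCl_ball (U := Metric.closedBall y (1 / 4)) ?_ subset_rfl
      intro z hz
      have := hball y z hy hz
      exact (hdy x z (by linarith) (by linarith)).differentiableAt.differentiableWithinAt
    · intro z hz
      have := hball y z hy (Metric.sphere_subset_closedBall hz)
      exact hM (x, z) (by simp [hx, this])
  have step2 : ∀ x y : ℂ, ‖x‖ ≤ 3 / 4 → ‖y‖ ≤ 1 / 2 → ‖G (x, y) - G (x, 0)‖ ≤ M / (1 / 4) * ‖y‖ := by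
    intro x y hx hy
    have := (convex_closedBall (0 : ℂ) (1 / 2)).norm_image_sub_le_of_norm_deriv_le
      (f := fun z => G (x, z)) (C := M / (1 / 4)) (x := 0) (y := y)
      (fun z hz => by
        rw [mem_closedBall_zero_iff] at hz
        exact (hdy x z (by linarith) (by linarith)).differentiableAt)
      (fun z hz => by
        rw [mem_closedBall_zero_iff] at hz
        exact step1 x z hx hz) (by simp) (by simpa using hy)
    simpa using this
  refine ⟨M / (1 / 4) / (1 / 4), by positivity, ?_⟩
  intro x y hx hy
  have hd : ∀ z, ‖z‖ < 1 → HasDerivAt (fun z => G (z, y) - G (z, 0))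
      (fderiv ℂ G (z, y) (1, 0) - fderiv ℂ G (z, 0) (1, 0)) z := fun z hz =>
    (hdx z y hz (by linarith)).sub (hdx z 0 hz (by simp))
  rw [← (hd x (by linarith)).deriv]
  have := Complex.norm_deriv_le_of_forall_mem_sphere_norm_le (c := x) (R := 1 / 4)
    (C := M / (1 / 4) * ‖y‖) (f := fun z => G (z, y) - G (z, 0)) (by norm_num)
    (DifferentiableOn.diffContOnCl_ball (U := Metric.closedBall x (1 / 4)) (fun z hz => by
      have := hball x z hx hz
      exact (hd z (by linarith)).differentiableAt.differentiableWithinAt) subset_rfl)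
    (fun z hz => step2 z y (hball x z hx (Metric.sphere_subset_closedBall hz)) hy)
  refine this.trans (le_of_eq ?_)
  ring

theorem aux_jac (lam mu : ℂ) (F : ℂ × ℂ → ℂ × ℂ)
    (hF : ∀ p : ℂ × ℂ, ‖p.1‖ < 1 → ‖p.2‖ < 1 → DifferentiableAt ℂ F p)
    (hsx : ∀ x : ℂ, ‖x‖ < 1 → F (x, 0) = (lam * x, 0))
    (hsy : ∀ y : ℂ, ‖y‖ < 1 → F (0, y) = (0, mu * y)) :
    ∃ K : ℝ, 0 ≤ K ∧ ∀ x y : ℂ, ‖x‖ ≤ 1 / 2 → ‖y‖ ≤ 1 / 2 →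
      ‖fderiv ℂ F (x, y) (1, 0) - (lam, 0)‖ ≤ K * ‖y‖ ∧
      ‖fderiv ℂ F (x, y) (0, 1) - (0, mu)‖ ≤ K * ‖x‖ ∧
      ‖F (x, y) - (lam * x, mu * y)‖ ≤ K * ‖y‖ * ‖x‖ := by
  obtain ⟨K1, hK1, h1⟩ := aux_cauchy F hF
  have hdx : ∀ x y : ℂ, ‖x‖ < 1 → ‖y‖ < 1 →
      HasDerivAt (fun z => F (z, y)) (fderiv ℂ F (x, y) (1, 0)) x := by
    intro x y hx hy
    exact (hF (x, y) hx hy).hasFDerivAt.comp_hasDerivAt x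
      ((hasDerivAt_id x).prodMk (hasDerivAt_const x y))
  have hdy : ∀ x y : ℂ, ‖x‖ < 1 → ‖y‖ < 1 →
      HasDerivAt (fun z => F (x, z)) (fderiv ℂ F (x, y) (0, 1)) y := by
    intro x y hx hy
    exact (hF (x, y) hx hy).hasFDerivAt.comp_hasDerivAt y
      ((hasDerivAt_const y x).prodMk (hasDerivAt_id y))
  have hsw : ∀ p : ℂ × ℂ, HasFDerivAt (Prod.swap : ℂ × ℂ → ℂ × ℂ)
      (ContinuousLinearEquiv.prodComm ℂ ℂ ℂ : ℂ × ℂ →L[ℂ] ℂ × ℂ) p := fun p =>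
    (ContinuousLinearEquiv.prodComm ℂ ℂ ℂ : ℂ × ℂ →L[ℂ] ℂ × ℂ).hasFDerivAt
  have hG : ∀ p : ℂ × ℂ, ‖p.1‖ < 1 → ‖p.2‖ < 1 → HasFDerivAt (F ∘ Prod.swap)
      ((fderiv ℂ F p.swap).comp (ContinuousLinearEquiv.prodComm ℂ ℂ ℂ : ℂ × ℂ →L[ℂ] ℂ × ℂ)) p :=
    fun p a b => HasFDerivAt.comp p (hF p.swap b a).hasFDerivAt (hsw p)
  obtain ⟨K2, hK2, h2⟩ := aux_cauchy (F ∘ Prod.swap) (fun p a b => (hG p a b).differentiableAt)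
  have fx : ∀ x : ℂ, ‖x‖ < 1 → fderiv ℂ F (x, 0) (1, 0) = (lam, 0) := by
    intro x hx
    refine (hdx x 0 hx (by simp)).unique ?_
    have : HasDerivAt (fun z : ℂ => (lam * z, (0 : ℂ))) (lam, 0) x := by
      simpa using ((hasDerivAt_id x).const_mul lam).prodMk (hasDerivAt_const x (0 : ℂ))
    refine this.congr_of_eventuallyEq ?_
    filter_upwards [Metric.isOpen_ball.mem_nhds (mem_ball_zero_iff.mpr hx)] with z hz
    exact hsx z (mem_ball_zero_iff.mp hz)
  have fy : ∀ y : ℂ, ‖y‖ < 1 → fderiv ℂ F (0, y) (0, 1) = (0, mu) := by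
    intro y hy
    refine (hdy 0 y (by simp) hy).unique ?_
    have : HasDerivAt (fun z : ℂ => ((0 : ℂ), mu * z)) (0, mu) y := by
      simpa using (hasDerivAt_const y (0 : ℂ)).prodMk ((hasDerivAt_id y).const_mul mu)
    refine this.congr_of_eventuallyEq ?_
    filter_upwards [Metric.isOpen_ball.mem_nhds (mem_ball_zero_iff.mpr hy)] with z hz
    exact hsy z (mem_ball_zero_iff.mp hz)
  have E1 : ∀ x y : ℂ, ‖x‖ ≤ 1 / 2 → ‖y‖ ≤ 1 / 2 →
      ‖fderiv ℂ F (x, y) (1, 0) - (lam, 0)‖ ≤ K1 * ‖y‖ := by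
    intro x y hx hy
    rw [← fx x (by linarith)]
    exact h1 x y hx hy
  refine ⟨K1 + K2, by positivity, fun x y hx hy => ⟨?_, ?_, ?_⟩⟩
  · refine (E1 x y hx hy).trans ?_
    gcongr
    linarith
  · have := h2 y x hy hx
    rw [(hG (y, x) (by simp only; linarith) (by simp only; linarith)).fderiv,
      (hG (y, 0) (by simp only; linarith) (by simp)).fderiv] at this
    simp only [ContinuousLinearMap.comp_apply, Prod.swap_prod_mk, ContinuousLinearEquiv.coe_coe,
      ContinuousLinearEquiv.prodComm_apply] at this
    rw [fy y (by linarith)] at this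
    refine this.trans ?_
    gcongr
    linarith
  · have hd : ∀ z, ‖z‖ < 1 → HasDerivAt (fun z => F (z, y) - (lam * z, (0 : ℂ)))
        (fderiv ℂ F (z, y) (1, 0) - (lam, 0)) z := fun z hz => by
      have : HasDerivAt (fun z : ℂ => (lam * z, (0 : ℂ))) (lam, 0) z := by
        simpa using ((hasDerivAt_id z).const_mul lam).prodMk (hasDerivAt_const z (0 : ℂ))
      exact (hdx z y hz (by linarith)).sub this
    have := (convex_closedBall (0 : ℂ) (1 / 2)).norm_image_sub_le_of_norm_deriv_le
      (f := fun z => F (z, y) - (lam * z, (0 : ℂ))) (C := K1 * ‖y‖) (x := 0) (y := x)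
      (fun z hz => by
        rw [mem_closedBall_zero_iff] at hz
        exact (hd z (by linarith)).differentiableAt)
      (fun z hz => by
        rw [mem_closedBall_zero_iff] at hz
        rw [(hd z (by linarith)).deriv]
        exact E1 z y hz hy) (by simp) (by simpa using hx)
    simp only [hsy y (by linarith), sub_zero] at this
    have e : F (x, y) - (lam * x, mu * y)
        = F (x, y) - (lam * x, 0) - ((0, mu * y) - (lam * 0, 0)) := by
      ext <;> simp
    rw [e]
    refine this.trans ?_
    gcongr
    linarith

theorem aux_prod (J : ℕ → Matrix (Fin 2) (Fin 2) ℂ) (m : ℕ) :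
    ((List.range (m + 1)).map (fun i => J (m + 1 - 1 - i))).prod
      = J m * ((List.range m).map (fun i => J (m - 1 - i))).prod := by
  rw [List.range_succ_eq_map, List.map_cons, List.prod_cons, List.map_map]
  congr 2
  refine congrArg (fun f => List.map f (List.range m)) ?_
  funext i
  simp only [Function.comp]
  congr 1
  omega

/-- Lemma 3.3. For a dissipative holomorphic map in semi-linearizing
coordinates (`|λ||μ|³ < 1`), along an orbit staying in a (shrunken) polydisk for `n`
steps, the matrix `A = DF(p_{n-1})·…·DF(p₀)` of `DFⁿ(p₀)` satisfies
`A₁₁, A₁₂ = O(|λμ|ⁿ)`, `A₂₁ = O(1)` and `|A₂₂| ≍ |μ|ⁿ`. -/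
theorem stmt_11 (lam mu : ℂ) (hlam0 : 0 < ‖lam‖) (hlam1 : ‖lam‖ < 1) (hmu : 1 < ‖mu‖)
    (hdiss : ‖lam‖ * ‖mu‖ ^ 3 < 1)
    (F : ℂ × ℂ → ℂ × ℂ)
    (hF : ∀ p : ℂ × ℂ, ‖p.1‖ < 1 → ‖p.2‖ < 1 → DifferentiableAt ℂ F p)
    (hsx : ∀ x : ℂ, ‖x‖ < 1 → F (x, 0) = (lam * x, 0))
    (hsy : ∀ y : ℂ, ‖y‖ < 1 → F (0, y) = (0, mu * y)) :
    ∃ r : ℝ, 0 < r ∧ r < 1 ∧ ∃ C c : ℝ, 0 < C ∧ 0 < c ∧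
      ∀ (n : ℕ) (p : ℕ → ℂ × ℂ),
        (∀ k, k ≤ n → ‖(p k).1‖ ≤ r ∧ ‖(p k).2‖ ≤ r) →
        (∀ k, k < n → p (k + 1) = F (p k)) →
        ∀ A : Matrix (Fin 2) (Fin 2) ℂ,
          A = ((List.range n).map (fun i => jacobian F (p (n - 1 - i)))).prod →
          ‖A 0 0‖ ≤ C * (‖lam‖ * ‖mu‖) ^ n ∧
          ‖A 0 1‖ ≤ C * (‖lam‖ * ‖mu‖) ^ n ∧
          ‖A 1 0‖ ≤ C ∧
          c * ‖mu‖ ^ n ≤ ‖A 1 1‖ ∧ ‖A 1 1‖ ≤ C * ‖mu‖ ^ n := by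
  obtain ⟨K, hK, hJ⟩ := aux_jac lam mu F hF hsx hsy
  set L := ‖lam‖ with hLdef
  set m := ‖mu‖ with hmdef
  have hm0 : 0 < m := by linarith
  obtain ⟨r, hr0, hr2, hd1, hd2⟩ : ∃ r : ℝ, 0 < r ∧ r ≤ 1 / 2 ∧ K * r ≤ (1 - L) / 4 ∧
      K * r ≤ (m - 1) / 4 := by
    have hp : 0 < min (1 - L) (m - 1) := lt_min (by linarith) (by linarith)
    have e : K * (min (1 - L) (m - 1) / (4 * (K + 1))) ≤ min (1 - L) (m - 1) / 4 := by
      rw [mul_div_assoc', div_le_div_iff₀ (by positivity) (by norm_num)]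
      nlinarith
    refine ⟨min (1 - L) (m - 1) / (4 * (K + 1)), by positivity, ?_, ?_, ?_⟩
    · rw [div_le_iff₀ (by positivity)]
      linarith [min_le_left (1 - L) (m - 1)]
    · linarith [min_le_left (1 - L) (m - 1)]
    · linarith [min_le_right (1 - L) (m - 1)]
  set B1 := 2 / (1 - L) with hB1
  set B2 := 2 / (m - 1) with hB2
  set E1 := Real.exp (K * B2 / L) with hE1
  set E2 := Real.exp (2 * (K * B1)) with hE2
  set C := Real.exp (K * B2 / L + K * E1 / L * (1 / (m - 1)) + K * E2 * (1 / (1 - L)) + K * B1)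
    with hC
  refine ⟨r, hr0, by linarith, C, (Real.exp (2 * (K * (B1 + B2))))⁻¹, Real.exp_pos _,
    inv_pos.mpr (Real.exp_pos _), ?_⟩
  intro n p hp horb A hA
  set P : ℕ → Matrix (Fin 2) (Fin 2) ℂ := fun j =>
    ((List.range j).map (fun i => jacobian F (p (j - 1 - i)))).prod with hP
  have hP0 : P 0 = 1 := by simp [hP]
  have hPs : ∀ k, P (k + 1) = jacobian F (p k) * P k := fun k =>
    aux_prod (fun i => jacobian F (p i)) k
  have hAP : A = P n := hA
  have hx1 : ∀ k, k ≤ n → ‖(p k).1‖ ≤ r := fun k hk => (hp k hk).1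
  have hy1 : ∀ k, k ≤ n → ‖(p k).2‖ ≤ r := fun k hk => (hp k hk).2
  have hest := fun k (hk : k ≤ n) => hJ (p k).1 (p k).2 ((hx1 k hk).trans hr2)
    ((hy1 k hk).trans hr2)
  simp only [Prod.mk.eta] at hest
  -- orbit estimates
  have hx : ∀ k, k < n → ‖(p (k + 1)).1‖ ≤ (L + K * ‖(p k).2‖) * ‖(p k).1‖ := by
    intro k hk
    have h := (norm_fst_le _).trans (hest k hk.le).2.2
    rw [horb k hk]
    simp only [Prod.fst_sub] at h
    have h2 := norm_sub_norm_le (F (p k)).1 (lam * (p k).1)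
    rw [norm_mul] at h2
    linarith
  have hy : ∀ k, k < n → (m - K * ‖(p k).1‖) * ‖(p k).2‖ ≤ ‖(p (k + 1)).2‖ := by
    intro k hk
    have h := (norm_snd_le _).trans (hest k hk.le).2.2
    rw [horb k hk]
    simp only [Prod.snd_sub] at h
    have h2 := norm_sub_norm_le (mu * (p k).2) (F (p k)).2
    rw [norm_mul, norm_sub_rev] at h2
    linarith
  obtain ⟨hX, hY, hxL, hym⟩ := aux_orbit L m K r hlam0 hlam1 hmu hK hr0 (by linarith) hd1 hd2 n
    (fun k => ‖(p k).1‖) (fun k => ‖(p k).2‖) (fun _ => norm_nonneg _) (fun _ => norm_nonneg _)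
    hx1 hy1 hx hy
  -- matrix entries
  have j00 : ∀ k, k ≤ n → ‖jacobian F (p k) 0 0‖ ≤ L + K * ‖(p k).2‖ := by
    intro k hk
    have h := (norm_fst_le _).trans (hest k hk).1
    simp only [Prod.fst_sub] at h
    have h2 := norm_sub_norm_le (fderiv ℂ F (p k) (1, 0)).1 lam
    simp only [jacobian, Matrix.of_apply, Matrix.cons_val', Matrix.cons_val_zero]
    linarith
  have j10 : ∀ k, k ≤ n → ‖jacobian F (p k) 1 0‖ ≤ K * ‖(p k).2‖ := by
    intro k hk
    have h := (norm_snd_le _).trans (hest k hk).1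
    simpa [jacobian] using h
  have j01 : ∀ k, k ≤ n → ‖jacobian F (p k) 0 1‖ ≤ K * ‖(p k).1‖ := by
    intro k hk
    have h := (norm_fst_le _).trans (hest k hk).2.1
    simpa [jacobian] using h
  have j11' : ∀ k, k ≤ n → ‖jacobian F (p k) 1 1 - mu‖ ≤ K * ‖(p k).1‖ := by
    intro k hk
    have h := (norm_snd_le _).trans (hest k hk).2.1
    simpa [jacobian] using h
  have j11 : ∀ k, k ≤ n → ‖jacobian F (p k) 1 1‖ ≤ m + K * ‖(p k).1‖ := by
    intro k hk
    have := norm_sub_norm_le (jacobian F (p k) 1 1) mu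
    linarith [j11' k hk]
  have j11l : ∀ k, k ≤ n → m - K * ‖(p k).1‖ ≤ ‖jacobian F (p k) 1 1‖ := by
    intro k hk
    have := norm_sub_norm_le mu (jacobian F (p k) 1 1)
    rw [norm_sub_rev] at this
    linarith [j11' k hk]
  have hu : ∀ c, ∀ k, k < n → ‖P (k + 1) 0 c‖ ≤
      (L + K * ‖(p k).2‖) * ‖P k 0 c‖ + K * ‖(p k).1‖ * ‖P k 1 c‖ := by
    intro c k hk
    rw [hPs, Matrix.mul_apply, Fin.sum_univ_two]
    refine (norm_add_le _ _).trans ?_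
    rw [norm_mul, norm_mul]
    have a := j00 k hk.le
    have b := j01 k hk.le
    gcongr
  have hv : ∀ c, ∀ k, k < n → ‖P (k + 1) 1 c‖ ≤
      K * ‖(p k).2‖ * ‖P k 0 c‖ + (m + K * ‖(p k).1‖) * ‖P k 1 c‖ := by
    intro c k hk
    rw [hPs, Matrix.mul_apply, Fin.sum_univ_two]
    refine (norm_add_le _ _).trans ?_
    rw [norm_mul, norm_mul]
    have a := j10 k hk.le
    have b := j11 k hk.le
    gcongr
  have hvl : ∀ c, ∀ k, k < n → (m - K * ‖(p k).1‖) * ‖P k 1 c‖ - K * ‖(p k).2‖ * ‖P k 0 c‖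
      ≤ ‖P (k + 1) 1 c‖ := by
    intro c k hk
    rw [hPs, Matrix.mul_apply, Fin.sum_univ_two]
    have h := norm_sub_le (jacobian F (p k) 1 0 * P k 0 c + jacobian F (p k) 1 1 * P k 1 c)
      (jacobian F (p k) 1 0 * P k 0 c)
    rw [add_sub_cancel_left, norm_mul, norm_mul (jacobian F (p k) 1 0)] at h
    have a := mul_le_mul_of_nonneg_right (j10 k hk.le) (norm_nonneg (P k 0 c))
    have b := mul_le_mul_of_nonneg_right (j11l k hk.le) (norm_nonneg (P k 1 c))
    linarith
  have hup := fun c => aux_upper L m K E1 E2 B1 B2 hlam0 hlam1 hmu hK (Real.exp_pos _).le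
    (Real.exp_pos _).le n (fun k => ‖(p k).1‖) (fun k => ‖(p k).2‖)
    (fun k => ‖P k 0 c‖) (fun k => ‖P k 1 c‖) (fun _ => norm_nonneg _) (fun _ => norm_nonneg _)
    (fun _ => norm_nonneg _) (fun _ => norm_nonneg _) (hX n le_rfl) (hY n le_rfl) hxL hym
    (hu c) (hv c)
  have hlow := aux_cone L m K r B1 B2 hlam0 hlam1 hmu hK hd1 hd2 n
    (fun k => ‖(p k).1‖) (fun k => ‖(p k).2‖)
    (fun k => ‖P k 0 1‖) (fun k => ‖P k 1 1‖) (fun _ => norm_nonneg _) (fun _ => norm_nonneg _)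
    hx1 hy1
    (fun _ => norm_nonneg _) (fun _ => norm_nonneg _) (hX n le_rfl) (hY n le_rfl)
    (hu 1) (hvl 1) (by simp [hP0])
  have u0 := hup 0
  have u1 := hup 1
  rw [← hC] at u0 u1
  simp only [hP0, Matrix.one_apply_eq, norm_one, one_mul, ne_eq, zero_ne_one, one_ne_zero,
    not_false_eq_true, Matrix.one_apply_ne, norm_zero, zero_mul, add_zero, zero_add, mul_one]
    at u0 u1 hlow
  rw [← hAP] at u0 u1 hlow
  have hLn : 0 < L ^ n := by positivity
  have hC0 : 0 < C := Real.exp_pos _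
  have q0 : 0 ≤ ‖A 0 0‖ / L ^ n := by positivity
  have q1 : 0 ≤ ‖A 0 1‖ / L ^ n := by positivity
  have hmn : 1 ≤ m ^ n := one_le_pow₀ hmu.le
  refine ⟨?_, ?_, ?_, ?_, ?_⟩
  · have h : ‖A 0 0‖ / L ^ n ≤ C := by linarith [norm_nonneg (A 1 0)]
    rw [div_le_iff₀ hLn] at h
    rw [mul_pow]
    refine h.trans ?_
    have : L ^ n ≤ L ^ n * m ^ n := le_mul_of_one_le_right hLn.le hmn
    gcongr
  · have h : ‖A 0 1‖ / L ^ n ≤ C * m ^ n := by linarith [norm_nonneg (A 1 1)]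
    rw [div_le_iff₀ hLn] at h
    rw [mul_pow]
    linarith
  · linarith
  · rw [inv_mul_le_iff₀ (Real.exp_pos _)]
    exact hlow
  · linarith
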